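/- arXiv:1804.10799 — 3 statements merged into one kernel-verified Lean document; each statement's English description precedes it below -/
import Mathlib

section
/- Let 𝒢 = (V,E) be a simple directed graph, let i ∈ V, and let C ⊆ V. Then (i, N_i) is identifiable from C if and only if for every admissible network matrix G over ℝ(z), the submatrix T_{C, N_i} of T := (I − G)⁻¹ (rows indexed by C, columns indexed by N_i) has rank |N_i| over the field ℝ(z). -/
open Polynomial Matrix

noncomputable section

/-- A rational function `f ∈ ℝ(z)` is *proper* if the degree of its numerator is at most
the degree of its denominator. -/
def Proper (f : RatFunc ℝ) : Prop := f.num.degree ≤ f.denom.degree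

/-- A rational function `f ∈ ℝ(z)` is *strictly proper* if the degree of its numerator is
strictly less than the degree of its denominator. -/
def StrictlyProper (f : RatFunc ℝ) : Prop := f.num.degree < f.denom.degree

/-- The (finite) limit at infinity of a proper rational function: the ratio of leading
coefficients when the degrees of numerator and denominator coincide, and `0` otherwise. -/
def limAtInfty (f : RatFunc ℝ) : ℝ :=
  if f.num.degree = f.denom.degree then f.num.leadingCoeff / f.denom.leadingCoeff else 0

/-- The set `N_i` of out-neighbours of node `i` in the directed graph with edge set `E`. -/
def Nout {n : ℕ} (E : Finset (Fin n × Fin n)) (i : Fin n) : Finset (Fin n) :=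
  Finset.univ.filter fun j => (i, j) ∈ E

/-- The real matrix `lim_{z→∞} (I - G(z))`, taken entrywise. -/
def limMatrix {n : ℕ} (G : Matrix (Fin n) (Fin n) (RatFunc ℝ)) : Matrix (Fin n) (Fin n) ℝ :=
  Matrix.of fun a b => limAtInfty ((1 - G) a b)

/-- A network matrix `G` over `ℝ(z)` is *admissible* for the graph with edge set `E` if
(P1) every entry is proper, (P2) `G j i ≠ 0` iff `(i,j) ∈ E`, and
(P3) every principal minor of `lim_{z→∞}(I - G(z))` is nonzero. -/
def Admissible {n : ℕ} (E : Finset (Fin n × Fin n))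
    (G : Matrix (Fin n) (Fin n) (RatFunc ℝ)) : Prop :=
  (∀ i j : Fin n, Proper (G j i)) ∧
  (∀ i j : Fin n, G j i ≠ 0 ↔ (i, j) ∈ E) ∧
  (∀ S : Finset (Fin n),
    ((limMatrix G).submatrix (fun x : {v // v ∈ S} => (x : Fin n))
      (fun x : {v // v ∈ S} => (x : Fin n))).det ≠ 0)

/-- The rows of `A` and `B` indexed by the subset `C` agree, i.e. `C·A = C·B` where `C`
also denotes the selection matrix of `C`. -/
def rowsAgree {n : ℕ} (C : Finset (Fin n)) (A B : Matrix (Fin n) (Fin n) (RatFunc ℝ)) : Prop :=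
  A.submatrix (fun c : {v // v ∈ C} => (c : Fin n)) id
    = B.submatrix (fun c : {v // v ∈ C} => (c : Fin n)) id

/-- `(i, N_i)` is identifiable from the measured node set `C`. -/
def IdentifiableNode {n : ℕ} (E : Finset (Fin n × Fin n)) (i : Fin n)
    (C : Finset (Fin n)) : Prop :=
  ∀ G Gbar : Matrix (Fin n) (Fin n) (RatFunc ℝ),
    Admissible E G → Admissible E Gbar →
    rowsAgree C (1 - G)⁻¹ (1 - Gbar)⁻¹ → ∀ j : Fin n, G j i = Gbar j i

/-- The graph is identifiable from the measured node set `C`. -/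
def IdentifiableGraph {n : ℕ} (E : Finset (Fin n × Fin n)) (C : Finset (Fin n)) : Prop :=
  ∀ G Gbar : Matrix (Fin n) (Fin n) (RatFunc ℝ),
    Admissible E G → Admissible E Gbar →
    rowsAgree C (1 - G)⁻¹ (1 - Gbar)⁻¹ → G = Gbar

/-!
The limit at infinity is a ring homomorphism on proper rational functions, so (P3) with `S = V`
makes `I - G` invertible for admissible `G`. For admissible `G` and `Ḡ`, the identity
`A⁻¹ - B⁻¹ = A⁻¹ (B - A) B⁻¹` shows that `C (I - G)⁻¹ = C (I - Ḡ)⁻¹` exactly when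
`C (I - G)⁻¹ (G - Ḡ) = 0`. The `i`-th column of `G - Ḡ` is supported on `N_i`, hence vanishes if
`T_{C,N_i}` has trivial kernel. Conversely, a nonzero kernel vector `x` of `T_{C,N_i}` yields a
second network matrix by adding `ε x` to the `i`-th column of `G`: if `ε` is so small for the
valuation at infinity that every nonzero `ε x_j` is strictly smaller than `G_{ji}`, then properness,
the sparsity pattern and the limit at infinity are unchanged.
-/

lemma exists_ne_zero_valuation_mul_lt {K Γ₀ ι : Type*} [Field K]
    [LinearOrderedCommGroupWithZero Γ₀] (v : Valuation K Γ₀) [v.IsNontrivial] [Finite ι]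
    {x y : ι → K} (hxy : ∀ j, x j ≠ 0 → y j ≠ 0) :
    ∃ ε ≠ 0, ∀ j, x j ≠ 0 → v (ε * x j) < v (y j) := by
  obtain ⟨π, hπ, hvπ⟩ := Valuation.IsNontrivial.exists_lt_one (v := v)
  rcases isEmpty_or_nonempty {j // x j ≠ 0} with hx | hx
  · exact ⟨1, one_ne_zero, fun j hj ↦ (hx.false ⟨j, hj⟩).elim⟩
  · obtain ⟨⟨k, hk⟩, hmin⟩ := Finite.exists_min fun j : {j // x j ≠ 0} ↦ v (y j / x j)
    have hquot : y k / x k ≠ 0 := div_ne_zero (hxy k hk) hk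
    refine ⟨π * (y k / x k), mul_ne_zero hπ hquot, fun j hj ↦ ?_⟩
    have hlt : v (π * (y k / x k)) < v (y k / x k) := by
      rw [map_mul]
      exact mul_lt_of_lt_one_left (zero_lt_iff.2 (v.ne_zero_iff.2 hquot)) hvπ
    calc v (π * (y k / x k) * x j) = v (π * (y k / x k)) * v (x j) := map_mul _ _ _
      _ < v (y j / x j) * v (x j) :=
        mul_lt_mul_of_pos_right (hlt.trans_le (hmin ⟨j, hj⟩)) (zero_lt_iff.2 (v.ne_zero_iff.2 hj))
      _ = v (y j) := by rw [← map_mul, div_mul_cancel₀ _ hj]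

lemma mulVec_eq_sum_col_of_support_subset {m n R : Type*} [CommSemiring R] [Fintype n]
    (M : Matrix m n R) {x : n → R} {s : Finset n} (hx : Function.support x ⊆ s) :
    M *ᵥ x = ∑ j ∈ s, x j • M.col j := by
  have hsum : M *ᵥ x = ∑ j, x j • M.col j := by
    simp only [mulVec_eq_sum, op_smul_eq_smul]
    rfl
  rw [hsum]
  refine (Finset.sum_subset s.subset_univ fun j _ hj ↦ ?_).symm
  rw [Function.notMem_support.1 fun h ↦ hj (hx h), zero_smul]

section LinearAlgebra

variable {m n R : Type*} [CommRing R] [Fintype n]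

lemma rank_eq_card_iff_linearIndependent_col [Nontrivial R] (M : Matrix m n R) :
    M.rank = Fintype.card n ↔ LinearIndependent R M.col := by
  rw [M.rank_eq_finrank_span_cols, linearIndependent_iff_card_eq_finrank_span, Set.finrank, eq_comm]

lemma rank_submatrix_eq_card_iff [Nontrivial R] (M : Matrix m n R) (s : Finset n) :
    (M.submatrix id (fun j : {j // j ∈ s} => (j : n))).rank = s.card ↔
      ∀ x : n → R, Function.support x ⊆ s → M *ᵥ x = 0 → x = 0 := by
  rw [← Fintype.card_coe s, rank_eq_card_iff_linearIndependent_col]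
  change LinearIndepOn R M.col (s : Set n) ↔ _
  rw [linearIndepOn_finset_iff]
  constructor
  · intro h x hx hMx
    funext j
    by_cases hj : j ∈ s
    · exact h x ((mulVec_eq_sum_col_of_support_subset M hx).symm.trans hMx) j hj
    · exact Function.notMem_support.1 fun h ↦ hj (hx h)
  · intro h g hg j hj
    have heq : ∀ k ∈ s, (s : Set n).indicator g k = g k := fun k hk ↦ Set.indicator_of_mem hk g
    have hzero : (s : Set n).indicator g = 0 := by
      refine h _ Set.support_indicator_subset ?_
      rw [mulVec_eq_sum_col_of_support_subset M Set.support_indicator_subset, ← hg]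
      exact Finset.sum_congr rfl fun k hk ↦ by rw [heq k hk]
    rw [← heq j hj, hzero, Pi.zero_apply]

lemma submatrix_inv_eq_submatrix_inv_iff [DecidableEq n] {A B : Matrix n n R} (hA : IsUnit A)
    (hB : IsUnit B) (r : m → n) :
    A⁻¹.submatrix r id = B⁻¹.submatrix r id ↔ A⁻¹.submatrix r id * (B - A) = 0 := by
  have hdiff : A⁻¹.submatrix r id - B⁻¹.submatrix r id = A⁻¹.submatrix r id * (B - A) * B⁻¹ :=
    congrArg (fun M ↦ M.submatrix r id) (Matrix.inv_sub_inv (iff_of_true hA hB))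
  rw [← sub_eq_zero, hdiff]
  refine ⟨fun h ↦ ?_, fun h ↦ by rw [h, Matrix.zero_mul]⟩
  have hdet : IsUnit B.det := (isUnit_iff_isUnit_det B).1 hB
  rw [← nonsing_inv_mul_cancel_right B (A⁻¹.submatrix r id * (B - A)) hdet, h, Matrix.zero_mul]

end LinearAlgebra

lemma degree_num_sub_limAtInfty_mul_denom_lt {f : RatFunc ℝ} (hf : Proper f) :
    (f.num - Polynomial.C (limAtInfty f) * f.denom).degree < f.denom.degree := by
  by_cases hdeg : f.num.degree = f.denom.degree
  · have hdenom : f.denom.leadingCoeff ≠ 0 := leadingCoeff_ne_zero.2 f.denom_ne_zero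
    have hnum : f.num ≠ 0 := by
      rw [← degree_ne_bot, hdeg, degree_ne_bot]
      exact f.denom_ne_zero
    have hlim : limAtInfty f = f.num.leadingCoeff / f.denom.leadingCoeff := if_pos hdeg
    have hlim_ne : limAtInfty f ≠ 0 := by
      rw [hlim]
      exact div_ne_zero (leadingCoeff_ne_zero.2 hnum) hdenom
    rw [← hdeg]
    refine degree_sub_lt_left ?_ hnum ?_
    · rw [degree_C_mul hlim_ne, hdeg]
    · rw [leadingCoeff_mul, leadingCoeff_C, hlim, div_mul_cancel₀ _ hdenom]
  · rw [limAtInfty, if_neg hdeg, map_zero, zero_mul, sub_zero]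
    exact lt_of_le_of_ne hf hdeg

local notation "v∞" => RatFunc.inftyValuation ℝ

section ValuationAtInfinity

lemma inftyValuation_algebraMap_le_iff {F : Type*} [Field F] [DecidableEq (RatFunc F)]
    {p q : F[X]} :
    RatFunc.inftyValuation F (algebraMap F[X] (RatFunc F) p) ≤
      RatFunc.inftyValuation F (algebraMap F[X] (RatFunc F) q) ↔ p.degree ≤ q.degree := by
  rcases eq_or_ne p 0 with rfl | hp
  · simp
  rcases eq_or_ne q 0 with rfl | hq
  · simp [hp]
  rw [RatFunc.inftyValuation_apply, RatFunc.inftyValuation_apply,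
    RatFunc.inftyValuation.polynomial F hp, RatFunc.inftyValuation.polynomial F hq,
    WithZero.exp_le_exp, Nat.cast_le, degree_eq_natDegree hp, degree_eq_natDegree hq, Nat.cast_le]

lemma inftyValuation_C_le_one {F : Type*} [Field F] [DecidableEq (RatFunc F)] (c : F) :
    RatFunc.inftyValuation F (RatFunc.C c) ≤ 1 := by
  rcases eq_or_ne c 0 with rfl | hc
  · simp
  · exact (RatFunc.inftyValuation.C F hc).le

variable [DecidableEq (RatFunc ℝ)]

lemma proper_iff_inftyValuation_le_one {f : RatFunc ℝ} : Proper f ↔ v∞ f ≤ 1 := by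
  have hdenom : 0 < v∞ (algebraMap ℝ[X] (RatFunc ℝ) f.denom) := by
    simp [zero_lt_iff, f.denom_ne_zero]
  conv_rhs => rw [← RatFunc.num_div_denom f, map_div₀, div_le_one₀ hdenom]
  exact inftyValuation_algebraMap_le_iff.symm

lemma inftyValuation_sub_limAtInfty_lt_one {f : RatFunc ℝ} (hf : v∞ f ≤ 1) :
    v∞ (f - RatFunc.C (limAtInfty f)) < 1 := by
  have hdenom : algebraMap ℝ[X] (RatFunc ℝ) f.denom ≠ 0 := by simp [f.denom_ne_zero]
  have hquot : f - RatFunc.C (limAtInfty f) =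
      algebraMap ℝ[X] (RatFunc ℝ) (f.num - Polynomial.C (limAtInfty f) * f.denom) /
        algebraMap ℝ[X] (RatFunc ℝ) f.denom := by
    rw [map_sub, map_mul, RatFunc.algebraMap_C, sub_div, RatFunc.num_div_denom,
      mul_div_cancel_right₀ _ hdenom]
  rw [hquot, map_div₀, div_lt_one₀ (zero_lt_iff.2 ((v∞).ne_zero_iff.2 hdenom)), ← not_le,
    inftyValuation_algebraMap_le_iff, not_le]
  exact degree_num_sub_limAtInfty_mul_denom_lt (proper_iff_inftyValuation_le_one.2 hf)

lemma limAtInfty_eq_of_inftyValuation_sub_lt_one {f : RatFunc ℝ} {c : ℝ}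
    (h : v∞ (f - RatFunc.C c) < 1) : limAtInfty f = c := by
  have hf : v∞ f ≤ 1 := by
    simpa only [sub_add_cancel] using (v∞).map_add_le h.le (inftyValuation_C_le_one c)
  by_contra hne
  have hlt : v∞ (RatFunc.C (limAtInfty f - c)) < 1 := by
    rw [map_sub, ← sub_sub_sub_cancel_left _ _ f]
    exact (v∞).map_sub_lt h (inftyValuation_sub_limAtInfty_lt_one hf)
  exact hlt.ne (RatFunc.inftyValuation.C ℝ (sub_ne_zero.2 hne))

lemma limAtInfty_add_of_inftyValuation_lt_one {f g : RatFunc ℝ} (hf : v∞ f ≤ 1) (hg : v∞ g < 1) :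
    limAtInfty (f + g) = limAtInfty f := by
  apply limAtInfty_eq_of_inftyValuation_sub_lt_one
  rw [add_sub_right_comm]
  exact (v∞).map_add_lt (inftyValuation_sub_limAtInfty_lt_one hf) hg

/-- The limit at infinity as a ring homomorphism on the ring of proper rational functions, encoded
as the valuation ring at infinity. -/
def limAtInftyHom : (v∞).integer →+* ℝ where
  toFun f := limAtInfty f
  map_one' := limAtInfty_eq_of_inftyValuation_sub_lt_one (by simp)
  map_zero' := limAtInfty_eq_of_inftyValuation_sub_lt_one (by simp)
  map_add' f g := by
    apply limAtInfty_eq_of_inftyValuation_sub_lt_one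
    rw [map_add, Subring.coe_add, add_sub_add_comm]
    exact (v∞).map_add_lt (inftyValuation_sub_limAtInfty_lt_one f.2)
      (inftyValuation_sub_limAtInfty_lt_one g.2)
  map_mul' f g := by
    apply limAtInfty_eq_of_inftyValuation_sub_lt_one
    have hsplit : (f * g : RatFunc ℝ) - RatFunc.C (limAtInfty f * limAtInfty g) =
        (f - RatFunc.C (limAtInfty f)) * g +
          RatFunc.C (limAtInfty f) * (g - RatFunc.C (limAtInfty g)) := by
      rw [map_mul]
      ring
    rw [Subring.coe_mul, hsplit]
    refine (v∞).map_add_lt ?_ ?_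
    · rw [map_mul]
      exact mul_lt_one_of_lt_of_le (inftyValuation_sub_limAtInfty_lt_one f.2) g.2
    · rw [map_mul, mul_comm]
      exact mul_lt_one_of_lt_of_le (inftyValuation_sub_limAtInfty_lt_one g.2)
        (inftyValuation_C_le_one _)

namespace Admissible

variable {n : ℕ} {E : Finset (Fin n × Fin n)} {G : Matrix (Fin n) (Fin n) (RatFunc ℝ)}

lemma inftyValuation_le_one (hG : Admissible E G) (j i : Fin n) : v∞ (G j i) ≤ 1 :=
  proper_iff_inftyValuation_le_one.1 (hG.1 i j)

lemma inftyValuation_one_sub_le_one (hG : Admissible E G) (j i : Fin n) :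
    v∞ ((1 - G) j i) ≤ 1 := by
  refine (v∞).map_sub_le ?_ (hG.inftyValuation_le_one j i)
  rw [Matrix.one_apply]
  split_ifs <;> simp

lemma add_of_inftyValuation_lt (hG : Admissible E G) {P : Matrix (Fin n) (Fin n) (RatFunc ℝ)}
    (hP : ∀ j i, P j i ≠ 0 → v∞ (P j i) < v∞ (G j i)) : Admissible E (G + P) := by
  have hval (j i : Fin n) : v∞ ((G + P) j i) = v∞ (G j i) := by
    by_cases h : P j i = 0
    · rw [Matrix.add_apply, h, add_zero]
    · exact (v∞).map_add_eq_of_lt_left (hP j i h)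
  have hsmall (j i : Fin n) : v∞ (P j i) < 1 := by
    by_cases h : P j i = 0
    · simp [h]
    · exact (hP j i h).trans_le (hG.inftyValuation_le_one j i)
  have hlim : limMatrix (G + P) = limMatrix G := by
    ext j i
    have hneg : v∞ (-P j i) < 1 := by simpa only [Valuation.map_neg] using hsmall j i
    simpa only [limMatrix, of_apply, ← sub_sub, Matrix.sub_apply _ P, sub_eq_add_neg _ (P j i)]
      using limAtInfty_add_of_inftyValuation_lt_one (hG.inftyValuation_one_sub_le_one j i) hneg
  refine ⟨fun i j ↦ ?_, fun i j ↦ ?_, ?_⟩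
  · rw [proper_iff_inftyValuation_le_one, hval]
    exact hG.inftyValuation_le_one j i
  · rw [← (v∞).ne_zero_iff, hval, (v∞).ne_zero_iff]
    exact hG.2.1 i j
  · rw [hlim]
    exact hG.2.2

end Admissible

end ValuationAtInfinity

namespace Admissible

variable {n : ℕ} {E : Finset (Fin n × Fin n)} {G : Matrix (Fin n) (Fin n) (RatFunc ℝ)}

lemma det_limMatrix_ne_zero (hG : Admissible E G) : (limMatrix G).det ≠ 0 := by
  rw [← det_submatrix_equiv_self (Equiv.subtypeUnivEquiv Finset.mem_univ)]
  exact hG.2.2 Finset.univ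

lemma isUnit_one_sub (hG : Admissible E G) : IsUnit (1 - G) := by
  classical
  rw [isUnit_iff_isUnit_det, isUnit_iff_ne_zero]
  intro hdet
  let A : Matrix (Fin n) (Fin n) (v∞).integer :=
    Matrix.of fun j i ↦ ⟨(1 - G) j i, hG.inftyValuation_one_sub_le_one j i⟩
  have hA : A.det = 0 := Subtype.ext (((v∞).integer.subtype.map_det A).trans hdet)
  have hlim : limAtInftyHom A.det = (limMatrix G).det := limAtInftyHom.map_det A
  exact hG.det_limMatrix_ne_zero (by rw [← hlim, hA, map_zero])

lemma exists_add_smul (hG : Admissible E G) {P : Matrix (Fin n) (Fin n) (RatFunc ℝ)}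
    (hP : ∀ j i, P j i ≠ 0 → G j i ≠ 0) : ∃ ε : RatFunc ℝ, ε ≠ 0 ∧ Admissible E (G + ε • P) := by
  classical
  obtain ⟨ε, hε, hlt⟩ := exists_ne_zero_valuation_mul_lt v∞
    (x := fun p : Fin n × Fin n ↦ P p.1 p.2) (y := fun p ↦ G p.1 p.2) fun p ↦ hP p.1 p.2
  exact ⟨ε, hε, hG.add_of_inftyValuation_lt fun j i h ↦ hlt (j, i) (right_ne_zero_of_mul h)⟩

lemma mem_Nout_iff (hG : Admissible E G) {i j : Fin n} : j ∈ Nout E i ↔ G j i ≠ 0 := by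
  rw [Nout, Finset.mem_filter_univ, hG.2.1]

end Admissible

/-- The rows of `(I - G)⁻¹` indexed by the measured nodes, written `C (I - G)⁻¹` with `C` the
selection matrix. -/
def measuredTransfer {n : ℕ} (C : Finset (Fin n)) (G : Matrix (Fin n) (Fin n) (RatFunc ℝ)) :
    Matrix {v // v ∈ C} (Fin n) (RatFunc ℝ) :=
  (1 - G)⁻¹.submatrix (fun c => (c : Fin n)) id

section Identifiability

variable {n : ℕ} {E : Finset (Fin n × Fin n)} {i : Fin n} {C : Finset (Fin n)}
  {G G' : Matrix (Fin n) (Fin n) (RatFunc ℝ)}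

lemma Admissible.rowsAgree_iff (hG : Admissible E G) (hG' : Admissible E G') :
    rowsAgree C (1 - G)⁻¹ (1 - G')⁻¹ ↔ measuredTransfer C G * (G - G') = 0 := by
  rw [← sub_sub_sub_cancel_left G' G 1]
  exact submatrix_inv_eq_submatrix_inv_iff hG.isUnit_one_sub hG'.isUnit_one_sub _

lemma IdentifiableNode.eq_zero_of_mulVec_eq_zero (hid : IdentifiableNode E i C)
    (hG : Admissible E G) {x : Fin n → RatFunc ℝ} (hx : Function.support x ⊆ Nout E i)
    (hker : measuredTransfer C G *ᵥ x = 0) : x = 0 := by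
  obtain ⟨ε, hε, hG'⟩ := hG.exists_add_smul (P := vecMulVec x (Pi.single i 1)) fun j k hjk ↦ by
    obtain rfl : k = i := by
      by_contra hk
      simp [vecMulVec_apply, hk] at hjk
    exact hG.mem_Nout_iff.1 (hx (left_ne_zero_of_mul hjk))
  have hrows : rowsAgree C (1 - G)⁻¹ (1 - (G + ε • vecMulVec x (Pi.single i 1)))⁻¹ := by
    rw [hG.rowsAgree_iff hG', sub_add_cancel_left, Matrix.mul_neg, Matrix.mul_smul, mul_vecMulVec,
      hker, zero_vecMulVec, smul_zero, neg_zero]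
  funext j
  simpa [vecMulVec_apply, hε] using hid _ _ hG hG' hrows j

lemma identifiableNode_of_mulVec_eq_zero_imp
    (hinj : ∀ G, Admissible E G → ∀ x : Fin n → RatFunc ℝ, Function.support x ⊆ Nout E i →
      measuredTransfer C G *ᵥ x = 0 → x = 0) : IdentifiableNode E i C := by
  intro G G' hG hG' hrows j
  have hsupp : Function.support ((G - G').col i) ⊆ Nout E i := by
    intro k hk
    by_contra hN
    have hGk : G k i = 0 := not_not.1 (mt hG.mem_Nout_iff.2 hN)
    have hGk' : G' k i = 0 := not_not.1 (mt hG'.mem_Nout_iff.2 hN)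
    exact hk (by simp [hGk, hGk'])
  have hker : measuredTransfer C G *ᵥ (G - G').col i = 0 :=
    congrArg (fun M ↦ M.col i) ((hG.rowsAgree_iff hG').1 hrows)
  exact sub_eq_zero.1 (congrFun (hinj G hG _ hsupp hker) j)

end Identifiability

theorem node_identifiability_iff_rank_general (n : ℕ) (E : Finset (Fin n × Fin n)) (i : Fin n)
    (C : Finset (Fin n)) :
    IdentifiableNode E i C ↔
      ∀ G : Matrix (Fin n) (Fin n) (RatFunc ℝ), Admissible E G →
        (((1 - G)⁻¹).submatrix (fun c : {v // v ∈ C} => (c : Fin n))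
          (fun j : {v // v ∈ Nout E i} => (j : Fin n))).rank = (Nout E i).card := by
  have hrank (G : Matrix (Fin n) (Fin n) (RatFunc ℝ)) :=
    rank_submatrix_eq_card_iff (measuredTransfer C G) (Nout E i)
  constructor
  · intro hid G hG
    exact (hrank G).2 fun x ↦ hid.eq_zero_of_mulVec_eq_zero hG
  · intro h
    exact identifiableNode_of_mulVec_eq_zero_imp fun G hG ↦ (hrank G).1 (h G hG)

/-- `(i, N_i)` is identifiable from `C` if and only if for every admissible
network matrix `G`, the submatrix `T_{C, N_i}` of `T = (I - G)⁻¹` has rank `|N_i|` over `ℝ(z)`. -/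
theorem node_identifiability_iff_rank (n : ℕ) (E : Finset (Fin n × Fin n))
    (hsimple : ∀ v : Fin n, (v, v) ∉ E) (i : Fin n) (C : Finset (Fin n)) :
    IdentifiableNode E i C ↔
      ∀ G : Matrix (Fin n) (Fin n) (RatFunc ℝ), Admissible E G →
        (((1 - G)⁻¹).submatrix (fun c : {v // v ∈ C} => (c : Fin n))
          (fun j : {v // v ∈ Nout E i} => (j : Fin n))).rank = (Nout E i).card :=
  node_identifiability_iff_rank_general n E i C
end
end

section
/- (Jacobi's identity for minors of the adjugate.) Let K be a field, let A be an invertible n×n matrix over K, and let M, N ⊆ {1,…,n} be index subsets with |M| = |N| = k ≥ 1. Then det((adj A)_{M,N}) = (−1)^{s} · (det A)^{k−1} · det(A_{N^c, M^c}), where s = Σ_{i∈M} i + Σ_{j∈N} j, adj A denotes the adjugate of A, A_{M,N} denotes the submatrix of A with rows indexed by M and columns indexed by N, and S^c := {1,…,n} \ S. -/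
open Matrix Finset

noncomputable section

/-!
Order the rows and columns so that those indexed by `M` and `N` come first. The adjugate becomes a
block matrix `B` and `A` a block matrix `C` with `B * C = det A • 1`. Replacing the lower block row
of `B` by `(0 1)` leaves `(B₁₁ B₁₂; 0 1) * C = (det A • 1, 0; C₂₁ C₂₂)`, whose determinants give
`det B₁₁ * det C = (det A) ^ k * det C₂₂`. The reorderings make `det C = ± det A`, the sign being
that of the two shuffles involved. A factor `det A` can be cancelled for the generic matrix over
`ℤ`, and hence, by specialization, for every matrix over every commutative ring.
-/

section BlockMatrices

variable {R m n ι : Type*} [CommRing R] [Fintype m] [Fintype n] [Fintype ι]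
  [DecidableEq m] [DecidableEq n] [DecidableEq ι]

theorem det_toBlocks₁₁_mul_det_of_mul_eq_smul_one {B C : Matrix (m ⊕ n) (m ⊕ n) R} {d : R}
    (h : B * C = d • 1) :
    B.toBlocks₁₁.det * C.det = d ^ Fintype.card m * C.toBlocks₂₂.det := by
  have hblocks : fromBlocks B.toBlocks₁₁ B.toBlocks₁₂ 0 1 * C
      = fromBlocks (d • 1) 0 C.toBlocks₂₁ C.toBlocks₂₂ := by
    rw [← fromBlocks_toBlocks B, ← fromBlocks_toBlocks C, fromBlocks_multiply, ← fromBlocks_one,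
      fromBlocks_smul, fromBlocks_inj] at h
    obtain ⟨h₁₁, h₁₂, -, -⟩ := h
    conv_lhs => rw [← fromBlocks_toBlocks C]
    simp only [fromBlocks_multiply, h₁₁, h₁₂, Matrix.zero_mul, Matrix.one_mul, zero_add, smul_zero]
  simpa only [det_mul, det_fromBlocks_zero₂₁, det_fromBlocks_zero₁₂, det_smul, det_one, mul_one]
    using congrArg det hblocks

theorem det_adjugate_submatrix_mul_det (A : Matrix ι ι R) (e f : m ⊕ n ≃ ι) :
    (A.adjugate.submatrix (e ∘ Sum.inl) (f ∘ Sum.inl)).det * A.det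
      = Equiv.Perm.sign (e.symm.trans f) * A.det ^ Fintype.card m
        * (A.submatrix (f ∘ Sum.inr) (e ∘ Sum.inr)).det := by
  let s : R := ((Equiv.Perm.sign (e.symm.trans f) : ℤˣ) : ℤ)
  have hs : s * s = 1 := by
    simp only [s, ← Int.cast_mul, Int.units_coe_mul_self, Int.cast_one]
  have hmul : A.adjugate.submatrix e f * A.submatrix f e
      = A.det • (1 : Matrix (m ⊕ n) (m ⊕ n) R) := by
    rw [submatrix_mul_equiv, adjugate_mul, ← submatrix_one_equiv e]
    rfl
  have hdet : (A.submatrix f e).det = s * A.det := det_reindex f.symm e.symm A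
  have hminors : (A.adjugate.submatrix (e ∘ Sum.inl) (f ∘ Sum.inl)).det * (s * A.det)
      = A.det ^ Fintype.card m * (A.submatrix (f ∘ Sum.inr) (e ∘ Sum.inr)).det :=
    hdet ▸ det_toBlocks₁₁_mul_det_of_mul_eq_smul_one hmul
  linear_combination s * hminors
    - (A.adjugate.submatrix (e ∘ Sum.inl) (f ∘ Sum.inl)).det * A.det * hs

theorem det_adjugate_submatrix [Nonempty m] (A : Matrix ι ι R) (e f : m ⊕ n ≃ ι) :
    (A.adjugate.submatrix (e ∘ Sum.inl) (f ∘ Sum.inl)).det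
      = Equiv.Perm.sign (e.symm.trans f) * A.det ^ (Fintype.card m - 1)
        * (A.submatrix (f ∘ Sum.inr) (e ∘ Sum.inr)).det := by
  let X := mvPolynomialX ι ι ℤ
  have generic : (X.adjugate.submatrix (e ∘ Sum.inl) (f ∘ Sum.inl)).det
      = Equiv.Perm.sign (e.symm.trans f) * X.det ^ (Fintype.card m - 1)
        * (X.submatrix (f ∘ Sum.inr) (e ∘ Sum.inr)).det := by
    apply mul_right_cancel₀ (det_mvPolynomialX_ne_zero ι ℤ)
    rw [det_adjugate_submatrix_mul_det, ← pow_sub_one_mul Fintype.card_ne_zero X.det]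
    ring
  let φ := MvPolynomial.eval₂Hom (Int.castRingHom R) fun p : ι × ι ↦ A p.1 p.2
  have hX : X.map φ = A := mvPolynomialX_map_eval₂ (Int.castRingHom R) A
  have hadj : X.adjugate.map φ = A.adjugate := by
    rw [← φ.mapMatrix_apply, φ.map_adjugate, φ.mapMatrix_apply, hX]
  simpa only [map_mul, map_pow, map_intCast, φ.map_det, φ.mapMatrix_apply, ← submatrix_map, hX,
    hadj] using congrArg φ generic

end BlockMatrices

theorem sum_orderEmbOfFin {α β : Type*} [LinearOrder α] [AddCommMonoid β] {k : ℕ}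
    (s : Finset α) (hs : #s = k) (g : α → β) :
    ∑ i, g (s.orderEmbOfFin hs i) = ∑ x ∈ s, g x := by
  conv_rhs => rw [← map_orderEmbOfFin_univ s hs, sum_map]
  rfl

section Shuffles

variable {k l n : ℕ}

theorem val_apply_inl_of_strictMono {β : Type*} [Fintype β] {e : Fin k ⊕ β ≃ Fin n}
    (he : StrictMono (e ∘ Sum.inl)) (i : Fin k) :
    (e (.inl i) : ℕ) = i + #{j | e (.inr j) < e (.inl i)} := by
  have hlt (i' : Fin k) : e (.inl i') < e (.inl i) ↔ i' < i := he.lt_iff_lt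
  calc
    (e (.inl i) : ℕ) = #{x | x < e (.inl i)} := by rw [filter_gt_eq_Iio, Fin.card_Iio]
    _ = #{i' | i' < i} + #{j | e (.inr j) < e (.inl i)} := by
      simp only [card_filter, ← Equiv.sum_comp e, Fintype.sum_sum_type, hlt]
    _ = i + #{j | e (.inr j) < e (.inl i)} := by rw [filter_gt_eq_Iio, Fin.card_Iio]

/-- A `(k, l)`-shuffle, as an interleaving of `Fin k` and `Fin l` that preserves both orders. The
codomain is `Fin n` with `n` free, so that `n = k + l` holds only propositionally and the
complement of a `k`-element subset of `Fin n` may be enumerated by `Fin (n - k)`. -/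
structure IsShuffle (e : Fin k ⊕ Fin l ≃ Fin n) : Prop where
  strictMono_inl : StrictMono (e ∘ Sum.inl)
  strictMono_inr : StrictMono (e ∘ Sum.inr)

theorem isShuffle_finSumEquivOfFinset {s : Finset (Fin n)} (hs : #s = k) (hs' : #sᶜ = l) :
    IsShuffle (finSumEquivOfFinset hs hs') :=
  ⟨(s.orderEmbOfFin hs).strictMono, (sᶜ.orderEmbOfFin hs').strictMono⟩

namespace IsShuffle

theorem sign_eq_prod {e : Fin k ⊕ Fin l ≃ Fin (k + l)} (he : IsShuffle e) :
    Equiv.Perm.sign (finSumFinEquiv.symm.trans e)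
      = ∏ i, ∏ j, if e (.inr j) < e (.inl i) then -1 else 1 := by
  have hinl (i i' : Fin k) : e (.inl i) < e (.inl i') ↔ i < i' := he.strictMono_inl.lt_iff_lt
  have hinr (j j' : Fin l) : e (.inr j) < e (.inr j') ↔ j < j' := he.strictMono_inr.lt_iff_lt
  have hnot_lt (i : Fin k) (j : Fin l) : e (.inl i) < e (.inr j) ↔ ¬ e (.inr j) < e (.inl i) := by
    rw [not_lt, (e.injective.ne Sum.inl_ne_inr).le_iff_lt]
  have hsorted (i : Fin k) (j : Fin l) : Fin.castAdd l i < Fin.natAdd k j :=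
    Nat.lt_add_right j i.isLt
  have hite (p : Prop) [Decidable p] : (if p then if p then (1 : ℤˣ) else -1 else 1) = 1 := by
    split_ifs <;> rfl
  simp only [Equiv.Perm.sign_eq_prod_prod_Ioi, ← filter_lt_eq_Ioi, prod_filter, Fin.prod_univ_add,
    Equiv.trans_apply, finSumFinEquiv_symm_apply_castAdd, finSumFinEquiv_symm_apply_natAdd,
    hinl, hinr, hnot_lt, hsorted, (hsorted _ _).not_gt, (Fin.strictMono_castAdd l).lt_iff_lt,
    Fin.natAdd_lt_natAdd_iff, hite, ite_not, if_true, if_false, prod_const_one, one_mul,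
    mul_one]

theorem sign_mul_neg_one_pow {e : Fin k ⊕ Fin l ≃ Fin (k + l)} (he : IsShuffle e) :
    Equiv.Perm.sign (finSumFinEquiv.symm.trans e) * (-1) ^ ∑ i : Fin k, (i : ℕ)
      = (-1) ^ ∑ i, (e (.inl i) : ℕ) := by
  simp only [val_apply_inl_of_strictMono he.strictMono_inl, sum_add_distrib, pow_add,
    he.sign_eq_prod]
  rw [mul_comm]
  simp only [← prod_pow_eq_pow_sum, ← prod_const, prod_filter]

theorem sign_symm_trans {e f : Fin k ⊕ Fin l ≃ Fin n} (he : IsShuffle e) (hf : IsShuffle f) :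
    Equiv.Perm.sign (e.symm.trans f)
      = (-1) ^ (∑ i, (e (.inl i) : ℕ) + ∑ i, (f (.inl i) : ℕ)) := by
  obtain rfl : k + l = n := by
    simpa only [Fintype.card_sum, Fintype.card_fin] using Fintype.card_congr e
  have hfactor : e.symm.trans f
      = (finSumFinEquiv.symm.trans e).symm.trans (finSumFinEquiv.symm.trans f) := by
    ext; simp
  rw [hfactor, Equiv.Perm.sign_trans, Equiv.Perm.sign_symm, pow_add, ← he.sign_mul_neg_one_pow,
    ← hf.sign_mul_neg_one_pow, mul_mul_mul_comm, Int.units_mul_self, mul_one, mul_comm]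

end IsShuffle

theorem sign_finSumEquivOfFinset_symm_trans {M N : Finset (Fin n)}
    (hM : #M = k) (hN : #N = k) (hM' : #Mᶜ = l) (hN' : #Nᶜ = l) :
    Equiv.Perm.sign ((finSumEquivOfFinset hM hM').symm.trans (finSumEquivOfFinset hN hN'))
      = (-1) ^ (∑ i ∈ M, ((i : ℕ) + 1) + ∑ j ∈ N, ((j : ℕ) + 1)) := by
  have hparity : ∑ i ∈ M, ((i : ℕ) + 1) + ∑ j ∈ N, ((j : ℕ) + 1)
      = ∑ i ∈ M, (i : ℕ) + ∑ j ∈ N, (j : ℕ) + 2 * k := by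
    simp only [sum_add_distrib, sum_const, hM, hN, smul_eq_mul]
    ring
  rw [hparity, pow_add, pow_mul, neg_one_sq, one_pow, mul_one,
    (isShuffle_finSumEquivOfFinset hM hM').sign_symm_trans (isShuffle_finSumEquivOfFinset hN hN')]
  simp only [finSumEquivOfFinset_inl, sum_orderEmbOfFin _ _ Fin.val]

end Shuffles

theorem jacobi_adjugate_minor_general {R : Type*} [CommRing R] {n k l : ℕ} (hk : 1 ≤ k)
    (A : Matrix (Fin n) (Fin n) R) {M N : Finset (Fin n)}
    (hM : #M = k) (hN : #N = k) (hM' : #Mᶜ = l) (hN' : #Nᶜ = l) :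
    (A.adjugate.submatrix (M.orderEmbOfFin hM) (N.orderEmbOfFin hN)).det
      = (-1 : R) ^ (∑ i ∈ M, ((i : ℕ) + 1) + ∑ j ∈ N, ((j : ℕ) + 1)) * A.det ^ (k - 1)
        * (A.submatrix (Nᶜ.orderEmbOfFin hN') (Mᶜ.orderEmbOfFin hM')).det := by
  have : NeZero k := ⟨Nat.one_le_iff_ne_zero.mp hk⟩
  have hminor := det_adjugate_submatrix A (finSumEquivOfFinset hM hM') (finSumEquivOfFinset hN hN')
  rw [sign_finSumEquivOfFinset_symm_trans, Fintype.card_fin] at hminor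
  push_cast at hminor
  exact hminor

/-- **Jacobi's identity for minors of the adjugate.** For an invertible
`n × n` matrix `A` over a field `K` and index subsets `M`, `N` of cardinality `k ≥ 1`,
`det ((adj A)_{M,N}) = (-1)^s · (det A)^(k-1) · det (A_{Nᶜ, Mᶜ})`, where
`s = Σ_{i ∈ M} i + Σ_{j ∈ N} j` (indices taken in `{1, …, n}`, i.e. `1`-based), and all
submatrices are taken with rows and columns in increasing index order. -/
theorem jacobi_adjugate_minor (K : Type*) [Field K] (n k : ℕ) (hk : 1 ≤ k)
    (A : Matrix (Fin n) (Fin n) K) (hA : IsUnit A)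
    (M N : Finset (Fin n)) (hM : M.card = k) (hN : N.card = k) :
    ((A.adjugate).submatrix
        (fun a : Fin k => ((M.orderIsoOfFin hM a : {x // x ∈ M}) : Fin n))
        (fun b : Fin k => ((N.orderIsoOfFin hN b : {x // x ∈ N}) : Fin n))).det
      = (-1 : K) ^ ((∑ i ∈ M, ((i : ℕ) + 1)) + ∑ j ∈ N, ((j : ℕ) + 1))
        * A.det ^ (k - 1)
        * (A.submatrix
            (fun a : Fin (n - k) => ((Nᶜ.orderIsoOfFin
              (by rw [Finset.card_compl, hN, Fintype.card_fin]) a : {x // x ∈ Nᶜ}) : Fin n))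
            (fun b : Fin (n - k) => ((Mᶜ.orderIsoOfFin
              (by rw [Finset.card_compl, hM, Fintype.card_fin]) b : {x // x ∈ Mᶜ}) : Fin n))).det := by
  exact jacobi_adjugate_minor_general hk A hM hN (by rw [card_compl, hM, Fintype.card_fin])
    (by rw [card_compl, hN, Fintype.card_fin])
end
end

section
/- Let 𝒢 = (V,E) be a simple directed graph, let i ∈ V and C ⊆ V, and let G, Ḡ be admissible network matrices over ℝ(z) with C(I − G)⁻¹ = C(I − Ḡ)⁻¹. Set D := G − Ḡ and T := (I − G)⁻¹. Then D_{ji} = 0 for all j ∉ N_i, and T_{C, N_i} · D_{N_i, i} = 0; consequently, if T_{C, N_i} has rank |N_i| over ℝ(z), then G_{•i} = Ḡ_{•i}. -/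
open Polynomial Matrix

noncomputable section

/-!
Put `T = (1 - G)⁻¹` and `D = G - Ḡ = (1 - Ḡ) - (1 - G)`. The rows of `T` and of `(1 - Ḡ)⁻¹` indexed
by `C` agree, so the `C`-rows of `T * D` are those of `(1 - Ḡ)⁻¹ * (1 - Ḡ) - T * (1 - G) = 0`.
Column `i` of `D` is supported on `N_i`, hence lies in the kernel of `T_{C, N_i}`, which is trivial
when that matrix has full column rank.

The matrices `1 - G` and `1 - Ḡ` are nonsingular because the limit at infinity respects sums and
products: the determinant of `1 - G` tends to that of the limit matrix, a principal minor.
-/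

section LimitAtInfinity

open Filter Topology

lemma proper_iff_intDegree_nonpos {f : RatFunc ℝ} : Proper f ↔ f.intDegree ≤ 0 := by
  rcases eq_or_ne f 0 with rfl | hf
  · simp [Proper]
  · rw [Proper, degree_eq_natDegree (RatFunc.num_ne_zero hf),
      degree_eq_natDegree f.denom_ne_zero, Nat.cast_le, RatFunc.intDegree, sub_nonpos, Nat.cast_le]

lemma proper_zero : Proper 0 := by
  simp [Proper]

lemma proper_one : Proper 1 := by
  simp [Proper]

lemma Proper.neg {f : RatFunc ℝ} (hf : Proper f) : Proper (-f) := by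
  rw [proper_iff_intDegree_nonpos] at hf ⊢
  rwa [RatFunc.intDegree_neg]

lemma Proper.add {f g : RatFunc ℝ} (hf : Proper f) (hg : Proper g) : Proper (f + g) := by
  rcases eq_or_ne g 0 with rfl | hg0
  · rwa [add_zero]
  rcases eq_or_ne (f + g) 0 with hfg | hfg
  · rw [hfg]
    exact proper_zero
  rw [proper_iff_intDegree_nonpos] at hf hg ⊢
  exact (RatFunc.intDegree_add_le hg0 hfg).trans (max_le hf hg)

lemma Proper.one_sub_apply {n : Type*} [DecidableEq n] {A : Matrix n n (RatFunc ℝ)} {a b : n}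
    (hA : Proper (A a b)) : Proper ((1 - A) a b) := by
  have hone : Proper ((1 : Matrix n n (RatFunc ℝ)) a b) := by
    rw [Matrix.one_apply]
    split_ifs
    exacts [proper_one, proper_zero]
  rw [Matrix.sub_apply, sub_eq_add_neg]
  exact hone.add hA.neg

lemma eventually_eval₂_denom_ne_zero (f : RatFunc ℝ) :
    ∀ᶠ x in atTop, f.denom.eval₂ (RingHom.id ℝ) x ≠ 0 := by
  simpa only [eval₂_id, IsRoot.def] using eventually_atTop_not_isRoot f.denom f.denom_ne_zero

/-- The graph of the limit at infinity: the pairs `(f, c)` of a rational function and a real number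
such that `f x → c` as `x → +∞`. Working with a subalgebra of `ℝ(z) × ℝ` makes every polynomial
identity, in particular the expansion of a determinant, pass to the limit. -/
def limitSubalgebra : Subalgebra ℝ (RatFunc ℝ × ℝ) where
  carrier := {p | Tendsto (fun x => p.1.eval (RingHom.id ℝ) x) atTop (𝓝 p.2)}
  algebraMap_mem' c := by simp [RatFunc.algebraMap_eq_C]
  add_mem' {p q} hp hq := by
    refine (Tendsto.add hp hq).congr' ?_
    filter_upwards [eventually_eval₂_denom_ne_zero p.1, eventually_eval₂_denom_ne_zero q.1]
      with x hpx hqx using (RatFunc.eval_add _ _ hpx hqx).symm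
  mul_mem' {p q} hp hq := by
    refine (Tendsto.mul hp hq).congr' ?_
    filter_upwards [eventually_eval₂_denom_ne_zero p.1, eventually_eval₂_denom_ne_zero q.1]
      with x hpx hqx using (RatFunc.eval_mul _ _ hpx hqx).symm

lemma eq_of_mk_mem_limitSubalgebra {f : RatFunc ℝ} {c d : ℝ} (hc : (f, c) ∈ limitSubalgebra)
    (hd : (f, d) ∈ limitSubalgebra) : c = d :=
  tendsto_nhds_unique hc hd

lemma Proper.mk_limAtInfty_mem_limitSubalgebra {f : RatFunc ℝ} (hf : Proper f) :
    (f, limAtInfty f) ∈ limitSubalgebra := by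
  change Tendsto (fun x => f.num.eval₂ (RingHom.id ℝ) x / f.denom.eval₂ (RingHom.id ℝ) x) atTop
    (𝓝 (limAtInfty f))
  simp only [eval₂_id]
  unfold limAtInfty
  split_ifs with hdeg
  · exact div_tendsto_atTop_leadingCoeff_div_of_degree_eq _ _ hdeg
  · exact div_tendsto_atTop_zero_of_degree_lt _ _ (lt_of_le_of_ne hf hdeg)

end LimitAtInfinity

section Determinant

lemma mk_det_mem_of_forall_mk_mem {n R S σ : Type*} [Fintype n] [DecidableEq n] [CommRing R]
    [CommRing S] [SetLike σ (R × S)] [SubringClass σ (R × S)] (P : σ) {A : Matrix n n R}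
    {B : Matrix n n S} (h : ∀ a b, (A a b, B a b) ∈ P) : (A.det, B.det) ∈ P := by
  let M : Matrix n n P := Matrix.of fun a b => ⟨(A a b, B a b), h a b⟩
  let ι : P →+* R × S := SubringClass.subtype P
  have hfst : (M.det : R × S).1 = A.det := ((RingHom.fst R S).comp ι).map_det M
  have hsnd : (M.det : R × S).2 = B.det := ((RingHom.snd R S).comp ι).map_det M
  rw [← hfst, ← hsnd]
  exact M.det.2

variable {n : ℕ} {E : Finset (Fin n × Fin n)} {G : Matrix (Fin n) (Fin n) (RatFunc ℝ)}

lemma Admissible.apply_eq_zero (hG : Admissible E G) {i j : Fin n} (hj : j ∉ Nout E i) :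
    G j i = 0 := by
  by_contra hji
  exact hj (Finset.mem_filter.2 ⟨Finset.mem_univ j, (hG.2.1 i j).1 hji⟩)

lemma Admissible.det_limMatrix_ne_zero_s12 (hG : Admissible E G) : (limMatrix G).det ≠ 0 := by
  rw [← Matrix.det_submatrix_equiv_self (Equiv.subtypeUnivEquiv Finset.mem_univ)]
  exact hG.2.2 Finset.univ

lemma Admissible.det_one_sub_ne_zero (hG : Admissible E G) : (1 - G).det ≠ 0 := by
  intro hdet
  have hlim : ((1 - G).det, (limMatrix G).det) ∈ limitSubalgebra :=
    mk_det_mem_of_forall_mk_mem limitSubalgebra fun a b =>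
      (hG.1 b a).one_sub_apply.mk_limAtInfty_mem_limitSubalgebra
  rw [hdet] at hlim
  exact hG.det_limMatrix_ne_zero_s12 (eq_of_mk_mem_limitSubalgebra hlim limitSubalgebra.zero_mem)

end Determinant

section Recovery

lemma submatrix_mul_sub_eq_zero_of_mul_eq_one {l m n R : Type*} [Fintype n] [DecidableEq m]
    [NonAssocRing R] {P Q : Matrix m n R} {A B : Matrix n m R} (hPA : P * A = 1) (hQB : Q * B = 1)
    {r : l → m} (hrows : P.submatrix r id = Q.submatrix r id) :
    P.submatrix r id * (B - A) = 0 :=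
  calc P.submatrix r id * (B - A)
      = Q.submatrix r id * B - P.submatrix r id * A := by rw [Matrix.mul_sub, hrows]
    _ = (Q * B).submatrix r id - (P * A).submatrix r id := rfl
    _ = 0 := by rw [hPA, hQB, sub_self]

lemma submatrix_val_mulVec_of_eq_zero {m n R : Type*} [Fintype n] [NonUnitalNonAssocSemiring R]
    (A : Matrix m n R) {N : Finset n} {v : n → R} (hv : ∀ j ∉ N, v j = 0) :
    A.submatrix id (fun j : {j // j ∈ N} => (j : n)) *ᵥ (fun j => v j) = A *ᵥ v := by
  funext a
  calc ∑ j : {j // j ∈ N}, A a j * v j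
      = ∑ j ∈ N, A a j * v j := Finset.sum_coe_sort N fun j => A a j * v j
    _ = ∑ j, A a j * v j := Finset.sum_subset N.subset_univ fun j _ hj => by rw [hv j hj, mul_zero]

lemma mulVec_injective_of_rank_eq_card {m n K : Type*} [Fintype n] [Field K] {A : Matrix m n K}
    (hA : A.rank = Fintype.card n) : Function.Injective A.mulVec := by
  rw [Matrix.mulVec_injective_iff, linearIndependent_iff_card_eq_finrank_span, ← hA,
    Matrix.rank_eq_finrank_span_cols]
  rfl

theorem column_recovery_from_rank_general {m n K : Type*} [Fintype n] [DecidableEq n] [Field K]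
    {G Gbar : Matrix n n K} (hG : (1 - G).det ≠ 0) (hGbar : (1 - Gbar).det ≠ 0)
    {N : Finset n} {i : n} (hGN : ∀ j ∉ N, G j i = 0) (hGbarN : ∀ j ∉ N, Gbar j i = 0) {r : m → n}
    (hrows : (1 - G)⁻¹.submatrix r id = (1 - Gbar)⁻¹.submatrix r id) :
    (∀ j ∉ N, (G - Gbar) j i = 0) ∧
    (1 - G)⁻¹.submatrix r (fun j : {j // j ∈ N} => (j : n)) *ᵥ (fun j => (G - Gbar) j i) = 0 ∧
    (((1 - G)⁻¹.submatrix r (fun j : {j // j ∈ N} => (j : n))).rank = N.card →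
      ∀ j, G j i = Gbar j i) := by
  have hsupp : ∀ j ∉ N, (G - Gbar) j i = 0 := fun j hj => by
    rw [Matrix.sub_apply, hGN j hj, hGbarN j hj, sub_zero]
  have hrowsD : (1 - G)⁻¹.submatrix r id * (G - Gbar) = 0 := by
    rw [← sub_sub_sub_cancel_left Gbar G 1]
    exact submatrix_mul_sub_eq_zero_of_mul_eq_one (Matrix.nonsing_inv_mul _ hG.isUnit)
      (Matrix.nonsing_inv_mul _ hGbar.isUnit) hrows
  have hker : (1 - G)⁻¹.submatrix r (fun j : {j // j ∈ N} => (j : n)) *ᵥ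
      (fun j => (G - Gbar) j i) = 0 :=
    (submatrix_val_mulVec_of_eq_zero ((1 - G)⁻¹.submatrix r id) hsupp).trans
      (funext fun a => congrFun (congrFun hrowsD a) i)
  refine ⟨hsupp, hker, fun hrank j => sub_eq_zero.1 ?_⟩
  by_cases hj : j ∈ N
  · have hinj := mulVec_injective_of_rank_eq_card (hrank.trans (Fintype.card_coe N).symm)
    exact congrFun (hinj (hker.trans (Matrix.mulVec_zero _).symm)) ⟨j, hj⟩
  · exact hsupp j hj

end Recovery

/-- Let `G`, `Ḡ` be admissible with `C (I - G)⁻¹ = C (I - Ḡ)⁻¹`, and set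
`D := G - Ḡ`, `T := (I - G)⁻¹`. Then `D j i = 0` for all `j ∉ N_i`, and
`T_{C, N_i} · D_{N_i, i} = 0`; consequently, if `T_{C, N_i}` has rank `|N_i|` over `ℝ(z)`,
then `G_{•i} = Ḡ_{•i}`. -/
theorem column_recovery_from_rank (n : ℕ) (E : Finset (Fin n × Fin n))
    (hsimple : ∀ v : Fin n, (v, v) ∉ E) (i : Fin n) (C : Finset (Fin n))
    (G Gbar : Matrix (Fin n) (Fin n) (RatFunc ℝ))
    (hG : Admissible E G) (hGbar : Admissible E Gbar)
    (hCT : rowsAgree C (1 - G)⁻¹ (1 - Gbar)⁻¹) :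
    (∀ j : Fin n, j ∉ Nout E i → (G - Gbar) j i = 0) ∧
    ((((1 - G)⁻¹).submatrix (fun c : {v // v ∈ C} => (c : Fin n))
        (fun j : {v // v ∈ Nout E i} => (j : Fin n))).mulVec
      (fun j : {v // v ∈ Nout E i} => (G - Gbar) (j : Fin n) i) = 0) ∧
    ((((1 - G)⁻¹).submatrix (fun c : {v // v ∈ C} => (c : Fin n))
        (fun j : {v // v ∈ Nout E i} => (j : Fin n))).rank = (Nout E i).card →
      ∀ j : Fin n, G j i = Gbar j i) :=
  column_recovery_from_rank_general hG.det_one_sub_ne_zero hGbar.det_one_sub_ne_zero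
    (fun _ => hG.apply_eq_zero) (fun _ => hGbar.apply_eq_zero) hCT
end
end
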